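/- Let K, N, M, L be natural numbers and let v : Fin K → ℝ³, w : Fin N → ℝ³, u : Fin M → ℝ³ be families of vectors such that: B(vᵢ,vᵢ) = B(wᵢ,wᵢ) = B(uᵢ,uᵢ) = 1 for all indices; B(vᵢ,vⱼ) ≥ 1, B(wᵢ,wⱼ) ≥ 1 and B(uᵢ,uⱼ) ≥ 1 whenever i ≠ j; B(vᵢ,wⱼ) ≥ 1 and B(vᵢ,uⱼ) ≥ 1 for all i, j; B(uᵢ,wⱼ) ≥ -1 for all i, j; and the set of pairs (i,j) with B(uᵢ,wⱼ) < 0 has at most L elements. Then for all nonnegative reals a, c, d, the vector τ = a·Σᵢ vᵢ + c·Σᵢ wᵢ + d·Σᵢ uᵢ satisfies B(τ,τ) ≥ (K·a)² + (N·c)² + (M·d)² - 2·L·c·d. -/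

import Mathlib

/-!
Expanding `B τ τ` by bilinearity, each of the three families contributes at least the square of
its total weight, because all entries of its Gram matrix are at least `1`. The cross terms involving
`v` are nonnegative, and the cross term between `u` and `w` is a sum of pairings of which at most
`L` are negative, each at least `-1`.
-/

/-- The Minkowski bilinear form on ℝ³. -/
noncomputable def B (x y : Fin 3 → ℝ) : ℝ := -(x 0 * y 0) + x 1 * y 1 + x 2 * y 2

theorem le_of_diag_of_ne {ι α : Type*} [Preorder α] {f : ι → ι → α} {r : α}
    (hdiag : ∀ i, r ≤ f i i) (hne : ∀ i j, i ≠ j → r ≤ f i j) (i j : ι) : r ≤ f i j := by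
  rcases eq_or_ne i j with rfl | hij
  · exact hdiag i
  · exact hne i j hij

theorem ncard_neg_nsmul_le_sum {ι α : Type*} [Fintype ι] [AddCommMonoid α] [LinearOrder α]
    [IsOrderedAddMonoid α] {f : ι → α} {r : α} (h : ∀ i, r ≤ f i) :
    {i | f i < 0}.ncard • r ≤ ∑ i, f i := by
  calc {i | f i < 0}.ncard • r = ({i | f i < 0} : Finset ι).card • r := by
        rw [← Set.ncard_coe_finset, Finset.coe_filter_univ]
    _ ≤ ∑ i with f i < 0, f i := Finset.card_nsmul_le_sum _ _ _ fun i _ => h i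
    _ ≤ ∑ i, f i :=
        Finset.sum_le_sum_of_subset_of_nonneg (Finset.filter_subset _ _) fun i _ hi => by
          simpa using hi

section BilinearMap

variable {R V W ι κ : Type*} [CommSemiring R] [AddCommMonoid V] [Module R V]
  [AddCommMonoid W] [Module R W] [Fintype ι] [Fintype κ]

theorem bilin_sum_sum (β : V →ₗ[R] W →ₗ[R] R) (x : ι → V) (y : κ → W) :
    β (∑ i, x i) (∑ j, y j) = ∑ p : ι × κ, β (x p.1) (y p.2) := by
  rw [LinearMap.map_sum₂, Fintype.sum_prod_type]
  simp only [map_sum]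

theorem bilin_smul_add_smul_add_smul_self {β : LinearMap.BilinForm R V} (hβ : β.IsSymm)
    (a c d : R) (x y z : V) :
    β (a • x + c • y + d • z) (a • x + c • y + d • z) =
      a ^ 2 * β x x + c ^ 2 * β y y + d ^ 2 * β z z +
        2 * (a * c * β x y + a * d * β x z + c * d * β z y) := by
  simp only [map_add, map_smul, LinearMap.add_apply, LinearMap.smul_apply, smul_eq_mul,
    hβ.eq y x, hβ.eq z x, hβ.eq y z]
  ring

variable [LinearOrder R] [IsStrictOrderedRing R]

theorem card_mul_card_mul_le_bilin_sum_sum (β : V →ₗ[R] W →ₗ[R] R) {x : ι → V} {y : κ → W}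
    {r : R} (h : ∀ i j, r ≤ β (x i) (y j)) :
    Fintype.card ι * Fintype.card κ * r ≤ β (∑ i, x i) (∑ j, y j) := by
  rw [bilin_sum_sum]
  simpa using Finset.card_nsmul_le_sum Finset.univ (fun p : ι × κ => β (x p.1) (y p.2)) r
    fun p _ => h p.1 p.2

theorem ncard_neg_mul_le_bilin_sum_sum (β : V →ₗ[R] W →ₗ[R] R) {x : ι → V} {y : κ → W}
    {r : R} (h : ∀ i j, r ≤ β (x i) (y j)) :
    {p : ι × κ | β (x p.1) (y p.2) < 0}.ncard * r ≤ β (∑ i, x i) (∑ j, y j) := by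
  rw [bilin_sum_sum, ← nsmul_eq_mul]
  exact ncard_neg_nsmul_le_sum fun p => h p.1 p.2

theorem bilin_sum_sum_nonneg (β : V →ₗ[R] W →ₗ[R] R) {x : ι → V} {y : κ → W}
    (h : ∀ i j, 0 ≤ β (x i) (y j)) : 0 ≤ β (∑ i, x i) (∑ j, y j) := by
  simpa using card_mul_card_mul_le_bilin_sum_sum β h

end BilinearMap

section BilinForm

variable {R V ι : Type*} [CommRing R] [LinearOrder R] [IsStrictOrderedRing R]
  [AddCommMonoid V] [Module R V] [Fintype ι]

theorem sq_card_mul_le_sq_mul_bilin_sum_self (β : LinearMap.BilinForm R V) {x : ι → V}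
    (h : ∀ i j, 1 ≤ β (x i) (x j)) (a : R) :
    (Fintype.card ι * a) ^ 2 ≤ a ^ 2 * β (∑ i, x i) (∑ i, x i) := by
  calc (Fintype.card ι * a) ^ 2 = a ^ 2 * (Fintype.card ι * Fintype.card ι * 1) := by ring
    _ ≤ a ^ 2 * β (∑ i, x i) (∑ i, x i) := by
        gcongr
        exact card_mul_card_mul_le_bilin_sum_sum β h

theorem cocycle_norm_lower_bound_general {κ μ : Type*} [Fintype κ] [Fintype μ]
    {β : LinearMap.BilinForm R V} (hβ : β.IsSymm) {v : ι → V} {w : κ → V} {u : μ → V} {L : ℕ}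
    (hvv : ∀ i j, 1 ≤ β (v i) (v j))
    (hww : ∀ i j, 1 ≤ β (w i) (w j))
    (huu : ∀ i j, 1 ≤ β (u i) (u j))
    (hvw : ∀ i j, 0 ≤ β (v i) (w j))
    (hvu : ∀ i j, 0 ≤ β (v i) (u j))
    (huw : ∀ i j, -1 ≤ β (u i) (w j))
    (hL : {p : μ × κ | β (u p.1) (w p.2) < 0}.ncard ≤ L)
    {a c d : R} (ha : 0 ≤ a) (hc : 0 ≤ c) (hd : 0 ≤ d) :
    (Fintype.card ι * a) ^ 2 + (Fintype.card κ * c) ^ 2 + (Fintype.card μ * d) ^ 2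
        - 2 * L * c * d ≤
      β (a • ∑ i, v i + c • ∑ i, w i + d • ∑ i, u i)
        (a • ∑ i, v i + c • ∑ i, w i + d • ∑ i, u i) := by
  have cross_vw : 0 ≤ a * c * β (∑ i, v i) (∑ i, w i) :=
    mul_nonneg (mul_nonneg ha hc) (bilin_sum_sum_nonneg β hvw)
  have cross_vu : 0 ≤ a * d * β (∑ i, v i) (∑ i, u i) :=
    mul_nonneg (mul_nonneg ha hd) (bilin_sum_sum_nonneg β hvu)
  have neg_L_le : -(L : R) ≤ β (∑ i, u i) (∑ i, w i) := by
    have hL' : ({p : μ × κ | β (u p.1) (w p.2) < 0}.ncard : R) ≤ L := mod_cast hL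
    linarith [ncard_neg_mul_le_bilin_sum_sum β huw]
  have cross_uw : c * d * -(L : R) ≤ c * d * β (∑ i, u i) (∑ i, w i) :=
    mul_le_mul_of_nonneg_left neg_L_le (mul_nonneg hc hd)
  rw [bilin_smul_add_smul_add_smul_self hβ]
  linarith [sq_card_mul_le_sq_mul_bilin_sum_self β hvv a,
    sq_card_mul_le_sq_mul_bilin_sum_self β hww c, sq_card_mul_le_sq_mul_bilin_sum_self β huu d]

end BilinForm

/-- The Minkowski form `B` as a bundled bilinear form, so that results on bilinear forms over an
arbitrary module apply to it. -/
noncomputable def minkowskiForm : LinearMap.BilinForm ℝ (Fin 3 → ℝ) :=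
  LinearMap.mk₂ ℝ B
    (fun x x' y => by simp only [B, Pi.add_apply]; ring)
    (fun r x y => by simp only [B, Pi.smul_apply, smul_eq_mul]; ring)
    (fun x y y' => by simp only [B, Pi.add_apply]; ring)
    (fun r x y => by simp only [B, Pi.smul_apply, smul_eq_mul]; ring)

theorem minkowskiForm_apply (x y : Fin 3 → ℝ) : minkowskiForm x y = B x y := rfl

theorem minkowskiForm_isSymm : minkowskiForm.IsSymm where
  eq x y := by simp only [minkowskiForm_apply, B, mul_comm]

theorem cocycle_norm_lower_bound (K N M L : ℕ)
    (v : Fin K → Fin 3 → ℝ) (w : Fin N → Fin 3 → ℝ) (u : Fin M → Fin 3 → ℝ)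
    (hv : ∀ i, B (v i) (v i) = 1)
    (hw : ∀ i, B (w i) (w i) = 1)
    (hu : ∀ i, B (u i) (u i) = 1)
    (hvv : ∀ i j, i ≠ j → 1 ≤ B (v i) (v j))
    (hww : ∀ i j, i ≠ j → 1 ≤ B (w i) (w j))
    (huu : ∀ i j, i ≠ j → 1 ≤ B (u i) (u j))
    (hvw : ∀ i j, 1 ≤ B (v i) (w j))
    (hvu : ∀ i j, 1 ≤ B (v i) (u j))
    (huw : ∀ i j, -1 ≤ B (u i) (w j))
    (hL : {p : Fin M × Fin N | B (u p.1) (w p.2) < 0}.ncard ≤ L)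
    (a c d : ℝ) (ha : 0 ≤ a) (hc : 0 ≤ c) (hd : 0 ≤ d) :
    (K * a) ^ 2 + (N * c) ^ 2 + (M * d) ^ 2 - 2 * L * c * d ≤
      B (a • ∑ i, v i + c • ∑ i, w i + d • ∑ i, u i)
        (a • ∑ i, v i + c • ∑ i, w i + d • ∑ i, u i) := by
  simpa only [Fintype.card_fin, minkowskiForm_apply] using
    cocycle_norm_lower_bound_general minkowskiForm_isSymm
      (le_of_diag_of_ne (fun i => (hv i).ge) hvv) (le_of_diag_of_ne (fun i => (hw i).ge) hww)
      (le_of_diag_of_ne (fun i => (hu i).ge) huu) (fun i j => zero_le_one.trans (hvw i j))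
      (fun i j => zero_le_one.trans (hvu i j)) huw hL ha hc hd
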